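/- arXiv:1711.08551 — 5 statements merged into one kernel-verified Lean document; each statement's English description precedes it below -/
import Mathlib

section
/- Let f_l : ℝⁿ → ℝ (l = 1,…,p), g_i : ℝⁿ → ℝ (i = 1,…,m) and h_j : ℝⁿ → ℝ (j = 1,…,r) be continuously differentiable. If x̄ is a local weak efficient solution of (MOP), then there exist sequences {x^k} ⊂ ℝⁿ and {(λ^k, μ^k, τ^k)} ⊂ ℝ^p_+ × ℝ^m_+ × ℝ^r such that: (A0) x^k → x̄; (A1) ‖Σ_{l=1}^p λ_l^k ∇f_l(x^k) + Σ_{i=1}^m μ_i^k ∇g_i(x^k) + Σ_{j=1}^r τ_j^k ∇h_j(x^k)‖ → 0 as k → ∞; (A2) Σ_{l=1}^p λ_l^k = 1 for every k; and (A3) for each i with g_i(x̄) < 0 one has μ_i^k = 0 for all sufficiently large k. -/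
open Filter Topology

/-- The squared positive part is differentiable, with derivative twice the positive part. -/
theorem hasDerivAt_max_zero_sq (t : ℝ) :
    HasDerivAt (fun s : ℝ => max s 0 ^ 2) (2 * max t 0) t := by
  rw [hasDerivAt_iff_isLittleO]
  have hbound : (fun s : ℝ => max s 0 ^ 2 - max t 0 ^ 2 - (s - t) • (2 * max t 0))
      =O[𝓝 t] fun s => (s - t) ^ 2 := by
    refine Asymptotics.IsBigO.of_bound 1 (Eventually.of_forall fun s => ?_)
    rw [Real.norm_eq_abs, Real.norm_eq_abs, abs_of_nonneg (sq_nonneg (s - t)), one_mul, abs_le,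
      smul_eq_mul]
    rcases le_total s 0 with hs | hs <;> rcases le_total t 0 with ht | ht <;>
      simp only [max_eq_left, max_eq_right, hs, ht] <;> constructor <;> nlinarith
  refine hbound.trans_isLittleO ?_
  simpa [Function.comp_def] using
    (Asymptotics.isLittleO_pow_id (𝕜 := ℝ) one_lt_two).comp_tendsto
      (tendsto_sub_nhds_zero_iff.2 (tendsto_id (x := 𝓝 t)))

/-- The log-sum-exp smoothing of the maximum of `u`, with parameter `t`. -/
noncomputable def logSumExp {ι : Type*} [Fintype ι] (t : ℝ) (u : ι → ℝ) : ℝ :=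
  t⁻¹ * Real.log (∑ l, Real.exp (t * u l))

/-- The softmax weights of `u`, with parameter `t`. -/
noncomputable def softmaxWeight {ι : Type*} [Fintype ι] (t : ℝ) (u : ι → ℝ) (l : ι) : ℝ :=
  Real.exp (t * u l) / ∑ l', Real.exp (t * u l')

section LogSumExp

variable {ι : Type*} [Fintype ι]

theorem sum_exp_pos [Nonempty ι] (u : ι → ℝ) : 0 < ∑ l, Real.exp (u l) :=
  Finset.sum_pos (fun _ _ => Real.exp_pos _) Finset.univ_nonempty

theorem softmaxWeight_nonneg (t : ℝ) (u : ι → ℝ) (l : ι) : 0 ≤ softmaxWeight t u l := by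
  unfold softmaxWeight
  positivity

theorem sum_softmaxWeight [Nonempty ι] (t : ℝ) (u : ι → ℝ) : ∑ l, softmaxWeight t u l = 1 := by
  simp only [softmaxWeight, ← Finset.sum_div]
  exact div_self (sum_exp_pos fun l => t * u l).ne'

theorem le_logSumExp {t : ℝ} (ht : 0 < t) (u : ι → ℝ) (l : ι) : u l ≤ logSumExp t u := by
  rw [logSumExp, le_inv_mul_iff₀ ht, ← Real.log_exp (t * u l)]
  exact Real.log_le_log (Real.exp_pos _)
    (Finset.single_le_sum (f := fun l => Real.exp (t * u l)) (fun _ _ => (Real.exp_pos _).le)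
      (Finset.mem_univ l))

theorem logSumExp_zero (t : ℝ) :
    logSumExp t (fun _ : ι => 0) = t⁻¹ * Real.log (Fintype.card ι) := by
  simp [logSumExp]

theorem HasFDerivAt.logSumExp [Nonempty ι] {E : Type*} [NormedAddCommGroup E] [NormedSpace ℝ E]
    {t : ℝ} (ht : 0 < t) {f : ι → E → ℝ} {f' : ι → E →L[ℝ] ℝ} {x : E}
    (hf : ∀ l, HasFDerivAt (f l) (f' l) x) :
    HasFDerivAt (fun y => logSumExp t fun l => f l y)
      (∑ l, softmaxWeight t (fun l => f l x) l • f' l) x := by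
  have hsum := HasFDerivAt.fun_sum (u := Finset.univ)
    fun l _ => ((hf l).const_mul t).exp
  refine ((hsum.log (sum_exp_pos fun l => t * f l x).ne').const_mul t⁻¹).congr_fderiv ?_
  simp only [Finset.smul_sum, smul_smul, softmaxWeight]
  refine Finset.sum_congr rfl fun l _ => ?_
  congr 1
  field_simp

end LogSumExp

section Penalty

variable {κ σ : Type*} [Fintype κ] [Fintype σ] {E : Type*}

/-- The quadratic penalty for the constraints `g ≤ 0` and `h = 0`. -/
noncomputable def quadraticPenalty (g : κ → E → ℝ) (h : σ → E → ℝ) (x : E) : ℝ :=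
  ∑ i, max (g i x) 0 ^ 2 + ∑ j, h j x ^ 2

theorem quadraticPenalty_nonneg (g : κ → E → ℝ) (h : σ → E → ℝ) (x : E) :
    0 ≤ quadraticPenalty g h x := by
  unfold quadraticPenalty
  positivity

theorem quadraticPenalty_eq_zero_iff {g : κ → E → ℝ} {h : σ → E → ℝ} {x : E} :
    quadraticPenalty g h x = 0 ↔ (∀ i, g i x ≤ 0) ∧ ∀ j, h j x = 0 := by
  rw [quadraticPenalty, add_eq_zero_iff_of_nonneg (by positivity) (by positivity),
    Finset.sum_eq_zero_iff_of_nonneg fun _ _ => by positivity,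
    Finset.sum_eq_zero_iff_of_nonneg fun _ _ => by positivity]
  simp

theorem continuous_quadraticPenalty [TopologicalSpace E] {g : κ → E → ℝ} {h : σ → E → ℝ}
    (hg : ∀ i, Continuous (g i)) (hh : ∀ j, Continuous (h j)) :
    Continuous (quadraticPenalty g h) := by
  unfold quadraticPenalty
  fun_prop

theorem hasFDerivAt_quadraticPenalty [NormedAddCommGroup E] [NormedSpace ℝ E]
    {g : κ → E → ℝ} {h : σ → E → ℝ} {g' : κ → E →L[ℝ] ℝ} {h' : σ → E →L[ℝ] ℝ} {x : E}
    (hg : ∀ i, HasFDerivAt (g i) (g' i) x) (hh : ∀ j, HasFDerivAt (h j) (h' j) x) :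
    HasFDerivAt (quadraticPenalty g h)
      (∑ i, (2 * max (g i x) 0) • g' i + ∑ j, (2 * h j x) • h' j) x := by
  refine (HasFDerivAt.fun_sum fun i _ => ?_).add (HasFDerivAt.fun_sum fun j _ => ?_)
  · exact (hasDerivAt_max_zero_sq (g i x)).comp_hasFDerivAt x (hg i)
  · simpa using (hh j).pow 2

variable {ι : Type*} [Fintype ι] [NormedAddCommGroup E]

/-- The smoothed, proximally regularized penalty function at `xbar`, with parameter `t`. -/
noncomputable def smoothPenalty (f : ι → E → ℝ) (g : κ → E → ℝ) (h : σ → E → ℝ) (xbar : E)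
    (t : ℝ) (x : E) : ℝ :=
  logSumExp t (fun l => f l x - f l xbar) + t * quadraticPenalty g h x + ‖x - xbar‖ ^ 2

theorem hasFDerivAt_smoothPenalty [InnerProductSpace ℝ E] [Nonempty ι]
    {f : ι → E → ℝ} {g : κ → E → ℝ} {h : σ → E → ℝ}
    {f' : ι → E →L[ℝ] ℝ} {g' : κ → E →L[ℝ] ℝ} {h' : σ → E →L[ℝ] ℝ} {x : E} (xbar : E) {t : ℝ}
    (ht : 0 < t) (hf : ∀ l, HasFDerivAt (f l) (f' l) x) (hg : ∀ i, HasFDerivAt (g i) (g' i) x)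
    (hh : ∀ j, HasFDerivAt (h j) (h' j) x) :
    HasFDerivAt (smoothPenalty f g h xbar t)
      (∑ l, softmaxWeight t (fun l => f l x - f l xbar) l • f' l
        + ∑ i, (t * (2 * max (g i x) 0)) • g' i + ∑ j, (t * (2 * h j x)) • h' j
        + 2 • innerSL ℝ (x - xbar)) x := by
  have hlse := HasFDerivAt.logSumExp ht fun l => (hf l).sub_const (f l xbar)
  have hnorm := ((hasFDerivAt_id x).sub_const xbar).norm_sq
  refine ((hlse.add ((hasFDerivAt_quadraticPenalty hg hh).const_mul t)).add hnorm).congr_fderiv ?_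
  simp only [smul_add, Finset.smul_sum, smul_smul, add_assoc, id, ContinuousLinearMap.comp_id]

theorem smoothPenalty_self {f : ι → E → ℝ} {g : κ → E → ℝ} {h : σ → E → ℝ} {xbar : E}
    (hg : ∀ i, g i xbar ≤ 0) (hh : ∀ j, h j xbar = 0) (t : ℝ) :
    smoothPenalty f g h xbar t xbar = t⁻¹ * Real.log (Fintype.card ι) := by
  simp [smoothPenalty, quadraticPenalty_eq_zero_iff.2 ⟨hg, hh⟩, logSumExp_zero]

/-- Points of a compact set of weak efficiency at which the penalty functions do not exceed their
values at `xbar` converge to `xbar` as the penalty parameter grows. -/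
theorem tendsto_of_smoothPenalty_le [Nonempty ι] {f : ι → E → ℝ} {g : κ → E → ℝ}
    {h : σ → E → ℝ} {xbar : E} (hf : ∀ l, Continuous (f l)) (hg : ∀ i, Continuous (g i))
    (hh : ∀ j, Continuous (h j)) (hxg : ∀ i, g i xbar ≤ 0) (hxh : ∀ j, h j xbar = 0)
    {K : Set E} (hK : IsCompact K)
    (hweak : ∀ x ∈ K, ((∀ i, g i x ≤ 0) ∧ ∀ j, h j x = 0) → ¬ ∀ l, f l x < f l xbar)
    {t : ℕ → ℝ} (ht : ∀ k, 0 < t k) (ht_top : Tendsto t atTop atTop)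
    {x : ℕ → E} (hxK : ∀ k, x k ∈ K)
    (hx : ∀ k, smoothPenalty f g h xbar (t k) (x k) ≤ smoothPenalty f g h xbar (t k) xbar) :
    Tendsto x atTop (𝓝 xbar) := by
  refine hK.tendsto_nhds_of_unique_mapClusterPt (Eventually.of_forall hxK) fun y hyK hy => ?_
  obtain ⟨ψ, hψ, hxy⟩ := hy.tendsto_subseq
  set c := Real.log (Fintype.card ι)
  have hle : ∀ k l, f l (x k) - f l xbar + t k * quadraticPenalty g h (x k)
      + ‖x k - xbar‖ ^ 2 ≤ (t k)⁻¹ * c := fun k l => by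
    have hxk := hx k
    rw [smoothPenalty_self hxg hxh, smoothPenalty] at hxk
    linarith [le_logSumExp (ht k) (fun l => f l (x k) - f l xbar) l]
  have hinv : Tendsto (fun k => (t (ψ k))⁻¹) atTop (𝓝 0) :=
    (ht_top.comp hψ.tendsto_atTop).inv_tendsto_atTop
  have hflim : ∀ l, Tendsto (fun k => f l (x (ψ k))) atTop (𝓝 (f l y)) := fun l =>
    ((hf l).tendsto y).comp hxy
  have hfeas : quadraticPenalty g h y = 0 := by
    refine le_antisymm ?_ (quadraticPenalty_nonneg g h y)
    obtain ⟨l⟩ := ‹Nonempty ι›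
    have hrhs : Tendsto (fun k => (t (ψ k))⁻¹ * ((t (ψ k))⁻¹ * c - (f l (x (ψ k)) - f l xbar)))
        atTop (𝓝 0) := by
      simpa using hinv.mul ((hinv.mul_const c).sub ((hflim l).sub_const (f l xbar)))
    refine le_of_tendsto_of_tendsto'
      (((continuous_quadraticPenalty hg hh).tendsto y).comp hxy) hrhs fun k => ?_
    rw [Function.comp_apply, le_inv_mul_iff₀ (ht _)]
    have := hle (ψ k) l
    simp only [Function.comp_apply]
    linarith [sq_nonneg ‖x (ψ k) - xbar‖]
  have hdecrease : ∀ l, f l y - f l xbar + ‖y - xbar‖ ^ 2 ≤ 0 := fun l => by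
    have hrhs : Tendsto (fun k => (t (ψ k))⁻¹ * c) atTop (𝓝 0) := by
      simpa using hinv.mul_const c
    refine le_of_tendsto_of_tendsto' (((hflim l).sub_const (f l xbar)).add
      ((hxy.sub_const xbar).norm.pow 2)) hrhs fun k => ?_
    have := hle (ψ k) l
    simp only [Function.comp_apply]
    linarith [mul_nonneg (ht (ψ k)).le (quadraticPenalty_nonneg g h (x (ψ k)))]
  by_contra hne
  refine hweak y hyK (quadraticPenalty_eq_zero_iff.1 hfeas) fun l => ?_
  have : 0 < ‖y - xbar‖ ^ 2 := by
    have := norm_pos_iff.2 (sub_ne_zero.2 hne)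
    positivity
  linarith [hdecrease l]

end Penalty

/-- **AKKT necessary optimality condition** (smooth case).
If `x̄` is a local weak efficient solution of the multiobjective problem
`min f(x)` s.t. `g(x) ≤ 0`, `h(x) = 0`, with all data continuously
differentiable, then there exist sequences satisfying (A0)–(A3). -/
theorem akkt_necessary_smooth
    {n p m r : ℕ} (hp : 0 < p)
    (f : Fin p → EuclideanSpace ℝ (Fin n) → ℝ)
    (g : Fin m → EuclideanSpace ℝ (Fin n) → ℝ)
    (h : Fin r → EuclideanSpace ℝ (Fin n) → ℝ)
    (hf : ∀ l, ContDiff ℝ 1 (f l))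
    (hg : ∀ i, ContDiff ℝ 1 (g i))
    (hh : ∀ j, ContDiff ℝ 1 (h j))
    (xbar : EuclideanSpace ℝ (Fin n))
    (hxg : ∀ i, g i xbar ≤ 0) (hxh : ∀ j, h j xbar = 0)
    (hweak : ∃ U ∈ 𝓝 xbar, ∀ x ∈ U,
      ((∀ i, g i x ≤ 0) ∧ (∀ j, h j x = 0)) → ¬ (∀ l, f l x < f l xbar)) :
    ∃ (x : ℕ → EuclideanSpace ℝ (Fin n))
      (lam : ℕ → Fin p → ℝ) (mu : ℕ → Fin m → ℝ) (tau : ℕ → Fin r → ℝ),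
      (∀ k l, 0 ≤ lam k l) ∧ (∀ k i, 0 ≤ mu k i) ∧
      -- (A0)
      Tendsto x atTop (𝓝 xbar) ∧
      -- (A1)
      Tendsto (fun k => ‖∑ l, lam k l • gradient (f l) (x k)
        + ∑ i, mu k i • gradient (g i) (x k)
        + ∑ j, tau k j • gradient (h j) (x k)‖) atTop (𝓝 0) ∧
      -- (A2)
      (∀ k, ∑ l, lam k l = 1) ∧
      -- (A3)
      (∀ i, g i xbar < 0 → ∀ᶠ k in atTop, mu k i = 0) := by
  obtain ⟨U, hU, hweak⟩ := hweak
  obtain ⟨ε, hε, hball⟩ := Metric.nhds_basis_closedBall.mem_iff.1 hU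
  have : Nonempty (Fin p) := ⟨⟨0, hp⟩⟩
  have hfd := fun l y => ((hf l).differentiable one_ne_zero y).hasFDerivAt
  have hgd := fun i y => ((hg i).differentiable one_ne_zero y).hasFDerivAt
  have hhd := fun j y => ((hh j).differentiable one_ne_zero y).hasFDerivAt
  let t : ℕ → ℝ := fun k => k + 1
  have ht : ∀ k, 0 < t k := fun k => by positivity
  have hderiv := fun k y => hasFDerivAt_smoothPenalty xbar (ht k) (fun l => hfd l y)
    (fun i => hgd i y) fun j => hhd j y
  have hK := isCompact_closedBall xbar ε
  have hmem : xbar ∈ Metric.closedBall xbar ε := Metric.mem_closedBall_self hε.le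
  choose x hxK hxmin using fun k => hK.exists_isMinOn ⟨xbar, hmem⟩
    fun y _ => (hderiv k y).continuousAt.continuousWithinAt
  have hx : Tendsto x atTop (𝓝 xbar) :=
    tendsto_of_smoothPenalty_le (fun l => (hf l).continuous) (fun i => (hg i).continuous)
      (fun j => (hh j).continuous) hxg hxh hK (fun y hy => hweak y (hball hy)) ht
      (tendsto_atTop_add_const_right _ _ tendsto_natCast_atTop_atTop) hxK
      fun k => hxmin k hmem
  refine ⟨x, fun k => softmaxWeight (t k) fun l => f l (x k) - f l xbar,
    fun k i => t k * (2 * max (g i (x k)) 0), fun k j => t k * (2 * h j (x k)),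
    fun k l => softmaxWeight_nonneg _ _ _, fun k i => ?_, hx, ?_,
    fun k => sum_softmaxWeight _ _, fun i hi => ?_⟩
  · have := ht k
    positivity
  · have hlim : Tendsto (fun k => ‖-((2 : ℝ) • (x k - xbar))‖) atTop (𝓝 0) := by
      simpa using ((hx.sub_const xbar).const_smul (2 : ℝ)).neg.norm
    refine hlim.congr' ?_
    filter_upwards [hx.eventually (Metric.ball_mem_nhds xbar hε)] with k hk
    have hlocal : IsLocalMin (smoothPenalty f g h xbar (t k)) (x k) :=
      (hxmin k).isLocalMin
        (mem_of_superset (Metric.isOpen_ball.mem_nhds hk) Metric.ball_subset_closedBall)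
    have hzero := hlocal.hasFDerivAt_eq_zero (hderiv k (x k))
    have hinner : (InnerProductSpace.toDual ℝ (EuclideanSpace ℝ (Fin n))).symm
        (innerSL ℝ (x k - xbar)) = x k - xbar :=
      (InnerProductSpace.toDual ℝ _).symm_apply_apply _
    have hgrad := congrArg (InnerProductSpace.toDual ℝ (EuclideanSpace ℝ (Fin n))).symm hzero
    simp only [map_add, map_sum, map_smulₛₗ, map_nsmul, map_zero, hinner, conj_trivial] at hgrad
    congr 1
    rw [← ofNat_smul_eq_nsmul ℝ] at hgrad
    exact (eq_neg_of_add_eq_zero_left hgrad).symm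
  · filter_upwards [hx.eventually ((hg i).continuous.continuousAt.eventually_lt_const hi)] with k hk
    simp [max_eq_right hk.le]
end

section
/- Let f_l : ℝⁿ → ℝ (l = 1,…,p), g_i : ℝⁿ → ℝ (i = 1,…,m) and h_j : ℝⁿ → ℝ (j = 1,…,r) be continuously differentiable. If x̄ is a local weak efficient solution of (MOP), then there exist sequences {x^k} ⊂ ℝⁿ, {(λ^k, μ^k, τ^k)} ⊂ ℝ^p_+ × ℝ^m_+ × ℝ^r and positive reals b_k, c_k > 0 (and sign choices ε_j ∈ {−1, 1} for the equality constraints) such that: x^k → x̄; Σ_{l=1}^p λ_l^k = 1; ‖Σ_{l=1}^p λ_l^k ∇f_l(x^k) + Σ_{i=1}^m μ_i^k ∇g_i(x^k) + Σ_{j=1}^r τ_j^k ε_j ∇h_j(x^k)‖ → 0; for each i with g_i(x̄) < 0 one has μ_i^k = 0 for all large k; (E1) μ_i^k = b_k · max(g_i(x^k), 0) ≥ 0 for all i and τ_j^k = c_k · ε_j h_j(x^k) ≥ 0 for all j and all k; and (E2) f_l(x^k) − f_l(x̄) + (1/2)[Σ_{i=1}^m μ_i^k g_i(x^k) + Σ_{j=1}^r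 τ_j^k ε_j h_j(x^k)] ≤ 0 for every k and every l = 1,…,p. -/
open Filter Topology

/-- Fermat's rule for finitely many objectives: at a local weak efficient point some convex
combination of the gradients vanishes. -/
theorem exists_stdSimplex_sum_smul_eq_zero {ι E : Type*} [Fintype ι]
    [NormedAddCommGroup E] [InnerProductSpace ℝ E] [CompleteSpace E]
    {F : ι → E → ℝ} {v : ι → E} {x : E} (hF : ∀ l, HasGradientAt (F l) (v l) x)
    (hx : ∀ᶠ y in 𝓝 x, ∃ l, F l x ≤ F l y) :
    ∃ w ∈ stdSimplex ℝ ι, ∑ l, w l • v l = 0 := by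
  classical
  by_contra! hne
  let L : (ι → ℝ) →ₗ[ℝ] E := Fintype.linearCombination ℝ v
  have hL : ∀ w, L w = ∑ l, w l • v l := Fintype.linearCombination_apply ℝ v
  have hLc : Continuous L := by
    simp only [funext hL]
    fun_prop
  have h0 : (0 : E) ∉ L '' stdSimplex ℝ ι := by
    rintro ⟨w, hw, hw0⟩
    exact hne w hw (by rw [← hL, hw0])
  obtain ⟨φ, u, hu0, hu⟩ := geometric_hahn_banach_point_closed
    ((convex_stdSimplex ℝ ι).linear_image L)
    ((isCompact_stdSimplex ℝ ι).image hLc).isClosed h0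
  rw [map_zero] at hu0
  have hφ : ∀ l, 0 < φ (v l) := fun l => by
    refine hu0.trans (hu _ ⟨Pi.single l 1, single_mem_stdSimplex ℝ l, ?_⟩)
    simp [hL, Pi.single_apply]
  let d : E := (InnerProductSpace.toDual ℝ E).symm φ
  have hd : ∀ l, inner ℝ (v l) d = φ (v l) := fun l => by
    rw [real_inner_comm, InnerProductSpace.toDual_symm_apply]
  have hlim : Tendsto (fun t : ℝ => x - t • d) (𝓝[>] 0) (𝓝 x) := by
    have : Continuous fun t : ℝ => x - t • d := by fun_prop
    simpa using (this.tendsto 0).mono_left nhdsWithin_le_nhds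
  have hdec : ∀ l, ∀ᶠ t : ℝ in 𝓝[>] 0, F l (x - t • d) < F l x := fun l => by
    have hline : HasDerivAt (fun t : ℝ => x - t • d) (-d) 0 := by
      simpa using ((hasDerivAt_id (0 : ℝ)).smul_const d).const_sub x
    have hder : HasDerivAt (fun t : ℝ => F l (x - t • d)) (-φ (v l)) 0 := by
      have hg : HasFDerivAt (F l) (InnerProductSpace.toDual ℝ E (v l)) (x - (0 : ℝ) • d) := by
        simpa using (hF l).hasFDerivAt
      simpa [hd, Function.comp_def] using hg.comp_hasDerivAt (0 : ℝ) hline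
    have hs := hder.hasDerivWithinAt (s := Set.Ioi 0)
    rw [hasDerivWithinAt_iff_tendsto_slope' (by simp)] at hs
    filter_upwards [hs.eventually_lt_const (neg_lt_zero.2 (hφ l)), self_mem_nhdsWithin]
      with t ht ht0
    have ht0' : (0 : ℝ) < t := ht0
    rw [slope_def_field, div_lt_iff₀ (by simpa using ht0')] at ht
    simpa using ht
  obtain ⟨t, ⟨l, hl⟩, ht⟩ := ((hlim.eventually hx).and (eventually_all.2 hdec)).exists
  exact (ht l).not_ge hl

/-- Penalization: if `x₀` is weakly efficient for `F` among the zeros of the penalty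
`P` in a closed ball, then a suitably weighted penalized problem, regularized by
`‖y - x₀‖ ^ 2 / 2`, has a local weak efficient point inside the ball at which every penalized
objective is at most its value at `x₀`. -/
theorem exists_penalized_local_weak_min {ι E : Type*} [Fintype ι] [Nonempty ι]
    [NormedAddCommGroup E] [ProperSpace E] {F : ι → E → ℝ} {P : E → ℝ} {x₀ : E} {δ : ℝ}
    (hF : ∀ l, Continuous (F l)) (hP : Continuous P) (hP0 : ∀ y, 0 ≤ P y) (hPx : P x₀ = 0)
    (hδ : 0 < δ) (hmin : ∀ y ∈ Metric.closedBall x₀ δ, P y = 0 → ∃ l, F l x₀ ≤ F l y) :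
    ∃ K : ℝ, 0 < K ∧ ∃ x ∈ Metric.ball x₀ δ, (∀ l, F l x - F l x₀ + K * P x ≤ 0) ∧
      ∀ᶠ y in 𝓝 x, ∃ l, F l x + K * P x + ‖x - x₀‖ ^ 2 / 2 ≤
        F l y + K * P y + ‖y - x₀‖ ^ 2 / 2 := by
  let φ : E → ℝ := fun y => Finset.univ.sup' Finset.univ_nonempty fun l => F l y - F l x₀
  have hφ : Continuous φ :=
    Continuous.finset_sup'_apply _ fun l _ => (hF l).sub continuous_const
  have hle : ∀ y l, F l y - F l x₀ ≤ φ y := fun y l =>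
    Finset.le_sup' (fun l => F l y - F l x₀) (Finset.mem_univ l)
  have hatt : ∀ y, ∃ l, φ y = F l y - F l x₀ := fun y => by
    obtain ⟨l, -, hl⟩ := Finset.exists_mem_eq_sup' Finset.univ_nonempty
      fun l => F l y - F l x₀
    exact ⟨l, hl⟩
  let ψ : ℕ → E → ℝ := fun K y => φ y + (K + 1) * P y + ‖y - x₀‖ ^ 2 / 2
  have hψ : ∀ K, Continuous (ψ K) := fun K => by fun_prop
  have hψx : ∀ K, ψ K x₀ = 0 := fun K => by
    obtain ⟨l, hl⟩ := hatt x₀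
    simp [ψ, hl, hPx]
  obtain ⟨K, hK⟩ := (isCompact_sphere x₀ δ).elim_directed_cover (fun K => {y | 0 < ψ K y})
    (fun K => isOpen_lt continuous_const (hψ K))
    (fun y hy => by
      have hyδ : ‖y - x₀‖ = δ := mem_sphere_iff_norm.1 hy
      rw [Set.mem_iUnion]
      rcases (hP0 y).eq_or_lt with hPy | hPy
      · obtain ⟨l, hl⟩ := hmin y (Metric.sphere_subset_closedBall hy) hPy.symm
        refine ⟨0, ?_⟩
        have := hle y l
        have : 0 < δ ^ 2 := by positivity
        simp only [Set.mem_ofPred_eq, ψ, ← hPy, hyδ]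
        linarith
      · obtain ⟨K, hK⟩ := exists_nat_gt (-φ y / P y)
        refine ⟨K, ?_⟩
        rw [div_lt_iff₀ hPy] at hK
        simp only [Set.mem_ofPred_eq, ψ, hyδ]
        nlinarith [sq_nonneg δ])
    (directed_of_isDirected_le fun K K' hKK y hy => by
      have hPy := hP0 y
      simp only [Set.mem_ofPred_eq, ψ] at hy ⊢
      refine hy.trans_le ?_
      gcongr)
  obtain ⟨x, hx, hxmin⟩ := (isCompact_closedBall x₀ δ).exists_isMinOn
    ⟨x₀, Metric.mem_closedBall_self hδ.le⟩ (hψ K).continuousOn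
  have hx0 : ψ K x ≤ 0 := hψx K ▸ hxmin (Metric.mem_closedBall_self hδ.le)
  have hxball : x ∈ Metric.ball x₀ δ := by
    refine lt_of_le_of_ne (Metric.mem_closedBall.1 hx) fun hxs => ?_
    exact (hK (Metric.mem_sphere.2 hxs) : 0 < ψ K x).not_ge hx0
  refine ⟨K + 1, by positivity, x, hxball, fun l => ?_, ?_⟩
  · have := hle x l
    have : φ x + (K + 1) * P x + ‖x - x₀‖ ^ 2 / 2 ≤ 0 := hx0
    nlinarith [sq_nonneg ‖x - x₀‖]
  · filter_upwards [Metric.isOpen_ball.mem_nhds hxball] with y hy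
    obtain ⟨l, hl⟩ := hatt y
    have hxy : φ x + (K + 1) * P x + ‖x - x₀‖ ^ 2 / 2 ≤ φ y + (K + 1) * P y + ‖y - x₀‖ ^ 2 / 2 :=
      hxmin (Metric.ball_subset_closedBall hy)
    have := hle x l
    exact ⟨l, by linarith⟩

/-- The gradient of a penalized and regularized objective. -/
theorem hasGradientAt_penalized {ι κ E : Type*} [Fintype ι] [Fintype κ]
    [NormedAddCommGroup E] [InnerProductSpace ℝ E] [CompleteSpace E]
    {f : E → ℝ} {g : ι → E → ℝ} {h : κ → E → ℝ} {x : E}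
    (hf : DifferentiableAt ℝ f x) (hg : ∀ i, DifferentiableAt ℝ (g i) x)
    (hh : ∀ j, DifferentiableAt ℝ (h j) x) (x₀ : E) (K : ℝ) :
    HasGradientAt (fun y => f y + K * ((∑ i, max (g i y) 0 ^ 2 + ∑ j, h j y ^ 2) / 2)
        + ‖y - x₀‖ ^ 2 / 2)
      (gradient f x + ∑ i, (K * max (g i x) 0) • gradient (g i) x
        + ∑ j, (K * h j x) • gradient (h j) x + (x - x₀)) x := by
  simp only [hasGradientAt_iff_hasFDerivAt, div_eq_mul_inv]
  have hgd : ∀ i, HasFDerivAt (fun y => max (g i y) 0 ^ 2)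
      ((2 * max (g i x) 0) • fderiv ℝ (g i) x) x := fun i =>
    (hasDerivAt_max_zero_sq (g i x)).comp_hasFDerivAt x (hg i).hasFDerivAt
  have hhd : ∀ j, HasFDerivAt (fun y => h j y ^ 2) ((2 * h j x) • fderiv ℝ (h j) x) x :=
    fun j => by simpa using (hh j).hasFDerivAt.pow 2
  have hsum := (HasFDerivAt.fun_sum fun i (_ : i ∈ Finset.univ) => hgd i).add
    (HasFDerivAt.fun_sum fun j (_ : j ∈ Finset.univ) => hhd j)
  have hnorm := ((hasFDerivAt_id (𝕜 := ℝ) x).sub_const x₀).norm_sq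
  refine ((hf.hasFDerivAt.add ((hsum.mul_const 2⁻¹).const_mul K)).add
    (hnorm.mul_const 2⁻¹)).congr_fderiv ?_
  ext y
  simp only [map_add, map_sum, map_smul, toDual_gradient, InnerProductSpace.toDual_apply_apply,
    add_apply, smul_apply, sum_apply, ContinuousLinearMap.comp_id, id, innerSL_apply_apply,
    smul_eq_mul, nsmul_eq_mul, mul_assoc, ← Finset.mul_sum]
  push_cast
  ring

/-- Arbitrarily close to a local weak efficient solution there are points with exact
approximate-stationarity residual `‖x - x₀‖` and quadratic-penalty multipliers. -/
theorem exists_near_penalty_multipliers {ι κ ν E : Type*} [Fintype ι] [Fintype κ] [Fintype ν]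
    [Nonempty ν] [NormedAddCommGroup E] [InnerProductSpace ℝ E] [FiniteDimensional ℝ E]
    {f : ν → E → ℝ} {g : ι → E → ℝ} {h : κ → E → ℝ}
    (hf : ∀ l, Differentiable ℝ (f l)) (hg : ∀ i, Differentiable ℝ (g i))
    (hh : ∀ j, Differentiable ℝ (h j)) {x₀ : E}
    (hxg : ∀ i, g i x₀ ≤ 0) (hxh : ∀ j, h j x₀ = 0)
    (hweak : ∃ U ∈ 𝓝 x₀, ∀ x ∈ U,
      ((∀ i, g i x ≤ 0) ∧ (∀ j, h j x = 0)) → ¬ (∀ l, f l x < f l x₀))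
    {δ : ℝ} (hδ : 0 < δ) :
    ∃ (x : E) (w : ν → ℝ) (K : ℝ), w ∈ stdSimplex ℝ ν ∧ 0 < K ∧ ‖x - x₀‖ < δ ∧
      ‖∑ l, w l • gradient (f l) x + ∑ i, (K * max (g i x) 0) • gradient (g i) x
        + ∑ j, (K * h j x) • gradient (h j) x‖ = ‖x - x₀‖ ∧
      ∀ l, f l x - f l x₀ + K * ((∑ i, max (g i x) 0 ^ 2 + ∑ j, h j x ^ 2) / 2) ≤ 0 := by
  have : ProperSpace E := FiniteDimensional.proper ℝ E
  have : CompleteSpace E := FiniteDimensional.complete ℝ E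
  obtain ⟨U, hU, hUweak⟩ := hweak
  obtain ⟨ρ, hρ, hρU⟩ := Metric.nhds_basis_closedBall.mem_iff.1 hU
  let P : E → ℝ := fun y => (∑ i, max (g i y) 0 ^ 2 + ∑ j, h j y ^ 2) / 2
  have hgc := fun i => (hg i).continuous
  have hhc := fun j => (hh j).continuous
  obtain ⟨K, hK, x, hx, hle, hmin⟩ := exists_penalized_local_weak_min (F := f) (P := P) (x₀ := x₀)
    (δ := min δ ρ) (fun l => (hf l).continuous) (by fun_prop) (fun y => by positivity)
    (by simp [P, hxh, hxg]) (lt_min hδ hρ) (fun y hy hPy => by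
      have hsg : 0 ≤ ∑ i, max (g i y) 0 ^ 2 := by positivity
      have hsh : 0 ≤ ∑ j, h j y ^ 2 := by positivity
      simp only [P] at hPy
      have hg0 : ∑ i, max (g i y) 0 ^ 2 = 0 := by linarith
      have hh0 : ∑ j, h j y ^ 2 = 0 := by linarith
      rw [Finset.sum_eq_zero_iff_of_nonneg fun _ _ => by positivity] at hg0 hh0
      have := hUweak y (hρU (Metric.closedBall_subset_closedBall (min_le_right _ _) hy))
        ⟨fun i => by simpa using hg0 i (Finset.mem_univ i),
          fun j => by simpa using hh0 j (Finset.mem_univ j)⟩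
      push Not at this
      exact this)
  obtain ⟨w, hw, hw0⟩ := exists_stdSimplex_sum_smul_eq_zero
    (fun l => hasGradientAt_penalized (hf l x) (fun i => hg i x) (fun j => hh j x) x₀ K) hmin
  refine ⟨x, w, K, hw, hK, ?_, ?_, hle⟩
  · exact (mem_ball_iff_norm.1 hx).trans_le (min_le_left _ _)
  · rw [← norm_neg (x - x₀)]
    congr 1
    rw [eq_neg_iff_add_eq_zero, ← hw0]
    simp only [smul_add, Finset.sum_add_distrib, ← Finset.sum_smul, hw.2, one_smul]


/-- **AKKT necessary optimality condition with the extra properties (E1), (E2)**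
(smooth case). If `x̄` is a local weak efficient solution, then there are
sequences `{x^k}`, multipliers `(λ^k, μ^k, τ^k)`, positive reals `b_k, c_k`
and sign choices `ε_j ∈ {−1, 1}` satisfying (A0)–(A3), (E1) and (E2). -/
theorem akkt_necessary_smooth_E1_E2
    {n p m r : ℕ} (hp : 0 < p)
    (f : Fin p → EuclideanSpace ℝ (Fin n) → ℝ)
    (g : Fin m → EuclideanSpace ℝ (Fin n) → ℝ)
    (h : Fin r → EuclideanSpace ℝ (Fin n) → ℝ)
    (hf : ∀ l, ContDiff ℝ 1 (f l))
    (hg : ∀ i, ContDiff ℝ 1 (g i))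
    (hh : ∀ j, ContDiff ℝ 1 (h j))
    (xbar : EuclideanSpace ℝ (Fin n))
    (hxg : ∀ i, g i xbar ≤ 0) (hxh : ∀ j, h j xbar = 0)
    (hweak : ∃ U ∈ 𝓝 xbar, ∀ x ∈ U,
      ((∀ i, g i x ≤ 0) ∧ (∀ j, h j x = 0)) → ¬ (∀ l, f l x < f l xbar)) :
    ∃ (x : ℕ → EuclideanSpace ℝ (Fin n))
      (lam : ℕ → Fin p → ℝ) (mu : ℕ → Fin m → ℝ) (tau : ℕ → Fin r → ℝ)
      (b c : ℕ → ℝ) (eps : Fin r → ℝ),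
      (∀ j, eps j = 1 ∨ eps j = -1) ∧
      (∀ k, 0 < b k) ∧ (∀ k, 0 < c k) ∧
      (∀ k l, 0 ≤ lam k l) ∧ (∀ k i, 0 ≤ mu k i) ∧
      -- (A0)
      Tendsto x atTop (𝓝 xbar) ∧
      -- (A2)
      (∀ k, ∑ l, lam k l = 1) ∧
      -- (A1)
      Tendsto (fun k => ‖∑ l, lam k l • gradient (f l) (x k)
        + ∑ i, mu k i • gradient (g i) (x k)
        + ∑ j, (tau k j * eps j) • gradient (h j) (x k)‖) atTop (𝓝 0) ∧
      -- (A3)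
      (∀ i, g i xbar < 0 → ∀ᶠ k in atTop, mu k i = 0) ∧
      -- (E1)
      (∀ k i, mu k i = b k * max (g i (x k)) 0) ∧
      (∀ k j, tau k j = c k * (eps j * h j (x k)) ∧ 0 ≤ tau k j) ∧
      -- (E2)
      (∀ k l, f l (x k) - f l xbar
        + (1 / 2) * (∑ i, mu k i * g i (x k)
          + ∑ j, tau k j * (eps j * h j (x k))) ≤ 0) := by
  have : Nonempty (Fin p) := ⟨⟨0, hp⟩⟩
  choose x w K hw hK hxδ hres hle using fun k : ℕ =>
    exists_near_penalty_multipliers (fun l => (hf l).differentiable one_ne_zero)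
      (fun i => (hg i).differentiable one_ne_zero) (fun j => (hh j).differentiable one_ne_zero)
      hxg hxh hweak (Nat.one_div_pos_of_nat (α := ℝ) (n := k))
  have hnorm : Tendsto (fun k => ‖x k - xbar‖) atTop (𝓝 0) :=
    squeeze_zero (fun k => norm_nonneg _) (fun k => (hxδ k).le)
      tendsto_one_div_add_atTop_nhds_zero_nat
  have hx : Tendsto x atTop (𝓝 xbar) := tendsto_iff_norm_sub_tendsto_zero.2 hnorm
  let sgn : ℕ → Fin r → Bool := fun k j => decide (0 ≤ h j (x k))
  obtain ⟨s, hs⟩ : ∃ s, ∃ᶠ k in atTop, sgn k = s :=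
    frequently_exists.1 (Frequently.of_forall fun k => ⟨sgn k, rfl⟩)
  obtain ⟨φ, hφ, hφs⟩ := extraction_of_frequently_atTop hs
  let eps : Fin r → ℝ := fun j => if s j then 1 else -1
  have heps : ∀ j, eps j = 1 ∨ eps j = -1 := fun j => by
    by_cases hj : s j <;> simp [eps, hj]
  have heps2 : ∀ j, eps j * eps j = 1 := fun j => by rcases heps j with e | e <;> simp [e]
  have hsign : ∀ k j, 0 ≤ eps j * h j (x (φ k)) := fun k j => by
    simp only [eps, ← hφs k, sgn, decide_eq_true_eq]
    split_ifs with hj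
    · simpa using hj
    · linarith
  have hlim := hφ.tendsto_atTop
  refine ⟨x ∘ φ, w ∘ φ, fun k i => K (φ k) * max (g i (x (φ k))) 0,
    fun k j => K (φ k) * (eps j * h j (x (φ k))), K ∘ φ, K ∘ φ, eps, heps, fun k => hK _,
    fun k => hK _, fun k l => (hw _).1 l,
    fun k i => mul_nonneg (hK _).le (le_max_right _ _), hx.comp hlim, fun k => (hw _).2, ?_, ?_,
    fun k i => rfl, fun k j => ⟨rfl, mul_nonneg (hK _).le (hsign k j)⟩, fun k l => ?_⟩
  · refine (hnorm.comp hlim).congr fun k => ?_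
    simp only [Function.comp_apply, ← hres]
    have : ∀ j, K (φ k) * (eps j * h j (x (φ k))) * eps j = K (φ k) * h j (x (φ k)) := fun j => by
      linear_combination K (φ k) * h j (x (φ k)) * heps2 j
    simp only [this]
  · intro i hi
    filter_upwards [(((hg i).continuous.tendsto xbar).comp (hx.comp hlim)).eventually_lt_const hi]
      with k hk
    have hk' : g i (x (φ k)) < 0 := hk
    simp [max_eq_right hk'.le]
  · refine le_of_eq_of_le ?_ (hle (φ k) l)
    have hmu : ∀ i, K (φ k) * max (g i (x (φ k))) 0 * g i (x (φ k))
        = K (φ k) * max (g i (x (φ k))) 0 ^ 2 := fun i => by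
      rcases le_total (g i (x (φ k))) 0 with hi | hi
      · simp [hi]
      · rw [max_eq_left hi]; ring
    have htau : ∀ j, K (φ k) * (eps j * h j (x (φ k))) * (eps j * h j (x (φ k)))
        = K (φ k) * h j (x (φ k)) ^ 2 := fun j => by
      linear_combination K (φ k) * h j (x (φ k)) ^ 2 * heps2 j
    simp only [Function.comp_apply, hmu, htau, ← Finset.mul_sum]
    ring
end

section
/- Let φ : ℝⁿ → ℝ, g_i : ℝⁿ → ℝ (i = 1,…,m) and h_j : ℝⁿ → ℝ (j = 1,…,r) be continuous, let δ > 0, let x̄ satisfy g_i(x̄) ≤ 0 for all i and h_j(x̄) = 0 for all j, and suppose φ(x̄) = 0 and φ(x) ≥ 0 for every x in B(x̄, δ) ∩ F, where B(x̄, δ) is the closed ball of radius δ centered at x̄ and F = {x : g_i(x) ≤ 0 ∀i, h_j(x) = 0 ∀j}. For each k ∈ ℕ let x^k be a minimizer over B(x̄, δ) of φ_k(x) := φ(x) + (k/2)[Σ_{i=1}^m (max(g_i(x), 0))² + Σ_{j=1}^r (h_j(x))²] + (1/2)‖x − x̄‖². Then the sequence {x^k} converges to x̄. -/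
open Filter Topology

/-- A sequence in a compact set along which the penalized values
`φ (x k) + (k / 2) * P (x k) + ‖x k - a‖ ^ 2 / 2` are nonpositive converges to `a`, provided that
`P` is nonnegative and that `φ` is nonnegative at the zeros of `P` in the compact set. -/
theorem tendsto_of_penalized_nonpos {E : Type*} [NormedAddCommGroup E] {φ P : E → ℝ}
    {K : Set E} (hK : IsCompact K) (hφ : Continuous φ) (hP : Continuous P)
    (hP_nonneg : ∀ y, 0 ≤ P y) (hφ_nonneg : ∀ y ∈ K, P y = 0 → 0 ≤ φ y)
    {a : E} {x : ℕ → E} (hx : ∀ k, x k ∈ K)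
    (hle : ∀ k : ℕ, φ (x k) + ((k : ℝ) / 2) * P (x k) + (1 / 2) * ‖x k - a‖ ^ 2 ≤ 0) :
    Tendsto x atTop (𝓝 a) := by
  refine hK.tendsto_nhds_of_unique_mapClusterPt (.of_forall hx) fun z hz hcluster ↦ ?_
  obtain ⟨ψ, hψ, hlim⟩ := hcluster.tendsto_subseq
  have hrest : Tendsto (fun k ↦ φ (x (ψ k)) + (1 / 2) * ‖x (ψ k) - a‖ ^ 2) atTop
      (𝓝 (φ z + (1 / 2) * ‖z - a‖ ^ 2)) :=
    ((by fun_prop : Continuous fun y ↦ φ y + (1 / 2) * ‖y - a‖ ^ 2).tendsto z).comp hlim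
  have hPlim : Tendsto (fun k ↦ P (x (ψ k))) atTop (𝓝 (P z)) := (hP.tendsto z).comp hlim
  have hPz : P z = 0 := by
    by_contra hne
    have hcoef : Tendsto (fun k ↦ (ψ k : ℝ) / 2) atTop atTop :=
      (tendsto_natCast_atTop_atTop.comp hψ.tendsto_atTop).atTop_div_const two_pos
    have hsum := hrest.add_atTop
      (hcoef.atTop_mul_pos ((hP_nonneg z).lt_of_ne' hne) hPlim)
    obtain ⟨k, hk⟩ := (hsum.eventually_gt_atTop 0).exists
    linarith [hle (ψ k)]
  have hlimit : φ z + (1 / 2) * ‖z - a‖ ^ 2 ≤ 0 := by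
    refine le_of_tendsto' hrest fun k ↦ ?_
    have : 0 ≤ ((ψ k : ℝ) / 2) * P (x (ψ k)) := mul_nonneg (by positivity) (hP_nonneg _)
    linarith [hle (ψ k)]
  have hsq : ‖z - a‖ ^ 2 = 0 :=
    le_antisymm (by linarith [hφ_nonneg z hz hPz]) (sq_nonneg _)
  simpa [sub_eq_zero] using hsq

/-- **Convergence of the external penalty iterates.** If `φ(x̄) = 0`,
`φ ≥ 0` on the feasible points of the closed ball `B(x̄, δ)`, and `x^k`
minimizes the penalized function `φ_k` over `B(x̄, δ)`, then `x^k → x̄`. -/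
theorem penalty_iterates_converge
    {n m r : ℕ}
    (φ : EuclideanSpace ℝ (Fin n) → ℝ)
    (g : Fin m → EuclideanSpace ℝ (Fin n) → ℝ)
    (h : Fin r → EuclideanSpace ℝ (Fin n) → ℝ)
    (hφc : Continuous φ) (hgc : ∀ i, Continuous (g i)) (hhc : ∀ j, Continuous (h j))
    (δ : ℝ) (hδ : 0 < δ)
    (xbar : EuclideanSpace ℝ (Fin n))
    (hxg : ∀ i, g i xbar ≤ 0) (hxh : ∀ j, h j xbar = 0)
    (hφ0 : φ xbar = 0)
    (hφnn : ∀ x ∈ Metric.closedBall xbar δ,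
      ((∀ i, g i x ≤ 0) ∧ (∀ j, h j x = 0)) → 0 ≤ φ x)
    (x : ℕ → EuclideanSpace ℝ (Fin n))
    (hmem : ∀ k, x k ∈ Metric.closedBall xbar δ)
    (hmin : ∀ k : ℕ, ∀ y ∈ Metric.closedBall xbar δ,
      φ (x k) + ((k : ℝ) / 2) * (∑ i, max (g i (x k)) 0 ^ 2 + ∑ j, h j (x k) ^ 2)
          + (1 / 2) * ‖x k - xbar‖ ^ 2
        ≤ φ y + ((k : ℝ) / 2) * (∑ i, max (g i y) 0 ^ 2 + ∑ j, h j y ^ 2)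
          + (1 / 2) * ‖y - xbar‖ ^ 2) :
    Tendsto x atTop (𝓝 xbar) := by
  refine tendsto_of_penalized_nonpos (φ := φ)
    (P := fun y ↦ ∑ i, max (g i y) 0 ^ 2 + ∑ j, h j y ^ 2)
    (isCompact_closedBall xbar δ) hφc (by fun_prop) (fun y ↦ by positivity)
    (fun y hy hPy ↦ hφnn y hy ?_) hmem fun k ↦ ?_
  · rw [add_eq_zero_iff_of_nonneg (by positivity) (by positivity),
      Finset.sum_eq_zero_iff_of_nonneg (fun _ _ ↦ sq_nonneg _),
      Finset.sum_eq_zero_iff_of_nonneg (fun _ _ ↦ sq_nonneg _)] at hPy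
    simpa using hPy
  · simpa [hφ0, hxh, hxg] using hmin k xbar (Metric.mem_closedBall_self hδ.le)
end

section
/- Let f_l : ℝⁿ → ℝ (l = 1,…,p) and ψ : ℝⁿ → ℝ be differentiable at a point x₀ ∈ ℝⁿ, and suppose x₀ is a local minimizer of the function x ↦ max{ f_l(x) : l = 1,…,p } + ψ(x). Then there exist λ_1,…,λ_p ≥ 0 with Σ_{l=1}^p λ_l = 1, λ_l = 0 whenever f_l(x₀) < max{ f_1(x₀),…,f_p(x₀) }, and Σ_{l=1}^p λ_l ∇f_l(x₀) + ∇ψ(x₀) = 0. -/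
open Filter Topology

/-- **Gordan alternative**: if no direction has negative inner product with every `v i`, `i ∈ A`,
then some convex combination of these vectors vanishes. -/
theorem exists_mem_stdSimplex_sum_smul_eq_zero {ι E : Type*} [Fintype ι]
    [NormedAddCommGroup E] [InnerProductSpace ℝ E] [CompleteSpace E] (A : Set ι) (v : ι → E)
    (h : ∀ d, ∃ i ∈ A, 0 ≤ inner ℝ (v i) d) :
    ∃ w ∈ stdSimplex ℝ ι, (∀ i ∉ A, w i = 0) ∧ ∑ i, w i • v i = 0 := by
  classical
  let L : (ι → ℝ) →ₗ[ℝ] E := Fintype.linearCombination ℝ v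
  let N : Submodule ℝ (ι → ℝ) := Submodule.pi Aᶜ fun _ => ⊥
  have hN : IsClosed (N : Set (ι → ℝ)) := N.closed_of_finiteDimensional
  have hcompact : IsCompact (L '' (stdSimplex ℝ ι ∩ N)) :=
    ((isCompact_stdSimplex ℝ ι).inter_right hN).image L.continuous_on_pi
  have hconvex : Convex ℝ (L '' (stdSimplex ℝ ι ∩ N)) :=
    ((convex_stdSimplex ℝ ι).inter N.convex).linear_image L
  by_cases h0 : (0 : E) ∈ L '' (stdSimplex ℝ ι ∩ N)
  · obtain ⟨w, ⟨hw, hwN⟩, hw0⟩ := h0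
    exact ⟨w, hw, fun i hi => hwN i hi, hw0⟩
  · obtain ⟨φ, u, hφ, hu⟩ := geometric_hahn_banach_closed_point hconvex hcompact.isClosed h0
    obtain ⟨i, hi, hid⟩ := h ((InnerProductSpace.toDual ℝ E).symm φ)
    have hvi : v i ∈ L '' (stdSimplex ℝ ι ∩ N) := by
      refine ⟨Pi.single i 1, ⟨single_mem_stdSimplex ℝ i, fun j hj => ?_⟩, ?_⟩
      · have hji : j ≠ i := fun hji => hj (hji ▸ hi)
        simp [hji]
      · simp [L]
    have := hφ _ hvi
    rw [real_inner_comm, InnerProductSpace.toDual_symm_apply] at hid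
    rw [map_zero] at hu
    linarith

/-- A function decreases strictly along a direction of negative directional derivative. -/
theorem eventually_lt_of_inner_gradient_neg {E : Type*}
    [NormedAddCommGroup E] [InnerProductSpace ℝ E] [CompleteSpace E] {f : E → ℝ} {x d : E}
    (hf : DifferentiableAt ℝ f x) (hd : inner ℝ (gradient f x) d < 0) :
    ∀ᶠ t : ℝ in 𝓝[>] 0, f (x + t • d) < f x := by
  have hderiv : HasDerivWithinAt (fun t : ℝ => f (x + t • d)) (inner ℝ (gradient f x) d)
      (Set.Ioi 0) 0 := by
    have := (hf.hasGradientAt.hasFDerivAt.hasLineDerivAt d).hasDerivWithinAt (s := Set.Ioi 0)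
    simpa using this
  filter_upwards [hderiv.limsup_slope_le' (by simp) hd, self_mem_nhdsWithin] with t ht ht0
  rw [slope_def_field, sub_zero, div_neg_iff] at ht
  have htpos : (0 : ℝ) < t := ht0
  simp only [zero_smul, add_zero] at ht
  rcases ht with h | h <;> linarith

/-- **First-order optimality condition for a pointwise maximum.** If `x₀` is a
local minimizer of `x ↦ max_l f_l(x) + ψ(x)` with all functions differentiable
at `x₀`, then there exist multipliers `λ_l ≥ 0` summing to `1`, vanishing on
inactive indices, with `Σ λ_l ∇f_l(x₀) + ∇ψ(x₀) = 0`. -/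
theorem max_rule_stationarity
    {n p : ℕ} (hp : 0 < p)
    (f : Fin p → EuclideanSpace ℝ (Fin n) → ℝ)
    (ψ : EuclideanSpace ℝ (Fin n) → ℝ)
    (x0 : EuclideanSpace ℝ (Fin n))
    (hf : ∀ l, DifferentiableAt ℝ (f l) x0)
    (hψ : DifferentiableAt ℝ ψ x0)
    (hmin : IsLocalMin (fun x =>
      Finset.univ.sup' (Finset.univ_nonempty_iff.mpr (Fin.pos_iff_nonempty.mp hp))
        (fun l => f l x) + ψ x) x0) :
    ∃ lam : Fin p → ℝ,
      (∀ l, 0 ≤ lam l) ∧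
      (∑ l, lam l = 1) ∧
      (∀ l, f l x0 <
        Finset.univ.sup' (Finset.univ_nonempty_iff.mpr (Fin.pos_iff_nonempty.mp hp))
          (fun l' => f l' x0) → lam l = 0) ∧
      ∑ l, lam l • gradient (f l) x0 + gradient ψ x0 = 0 := by
  set M : EuclideanSpace ℝ (Fin n) → ℝ := fun x =>
    Finset.univ.sup' (Finset.univ_nonempty_iff.mpr (Fin.pos_iff_nonempty.mp hp))
      (fun l => f l x)
  have hle : ∀ l, f l x0 ≤ M x0 := fun l =>
    Finset.le_sup' (fun l => f l x0) (Finset.mem_univ l)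
  obtain ⟨w, hw, hwA, hw0⟩ := exists_mem_stdSimplex_sum_smul_eq_zero {l | f l x0 = M x0}
    (fun l => gradient (f l) x0 + gradient ψ x0) (by
      by_contra! hd
      obtain ⟨d, hd⟩ := hd
      have hline : Tendsto (fun t : ℝ => x0 + t • d) (𝓝[>] 0) (𝓝 x0) := by
        have : ContinuousAt (fun t : ℝ => x0 + t • d) 0 := by fun_prop
        simpa [ContinuousAt] using this.tendsto.mono_left nhdsWithin_le_nhds
      have hdecr : ∀ l, ∀ᶠ t : ℝ in 𝓝[>] 0,
          f l (x0 + t • d) + ψ (x0 + t • d) < M x0 + ψ x0 := by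
        intro l
        rcases (hle l).eq_or_lt with hl | hl
        · have hgrad : gradient (f l + ψ) x0 = gradient (f l) x0 + gradient ψ x0 := by
            simp only [gradient, fderiv_add (hf l) hψ, map_add]
          rw [← hl]
          exact eventually_lt_of_inner_gradient_neg ((hf l).add hψ) (hgrad ▸ hd l hl)
        · exact (((hf l).continuousAt.add hψ.continuousAt).tendsto.comp hline).eventually_lt_const
            (add_lt_add_left hl _)
      obtain ⟨t, ht, htmin⟩ :=
        ((eventually_all.2 hdecr).and (hline.eventually hmin)).exists
      obtain ⟨l, -, hl⟩ := Finset.exists_mem_eq_sup'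
        (Finset.univ_nonempty_iff.mpr (Fin.pos_iff_nonempty.mp hp)) (fun l => f l (x0 + t • d))
      have hMt : M (x0 + t • d) = f l (x0 + t • d) := hl
      have := ht l
      linarith)
  refine ⟨w, hw.1, hw.2, fun l hl => hwA l hl.ne, ?_⟩
  simpa [smul_add, Finset.sum_add_distrib, ← Finset.sum_smul, hw.2] using hw0
end

section
/- Let f_l : ℝⁿ → ℝ (l = 1,…,p), g_i : ℝⁿ → ℝ (i = 1,…,m) and h_j : ℝⁿ → ℝ (j = 1,…,r) be continuously differentiable, and let x̄ ∈ F. Suppose there exist sequences {x^k} ⊂ ℝⁿ, {(λ^k, μ^k, τ^k)} ⊂ ℝ^p_+ × ℝ^m_+ × ℝ^r and positive reals b_k, c_k > 0 such that: (A0) x^k → x̄; (A1) ‖Σ_{l=1}^p λ_l^k ∇f_l(x^k) + Σ_{i=1}^m μ_i^k ∇g_i(x^k) + Σ_{j=1}^r τ_j^k ∇h_j(x^k)‖ → 0; (A2) Σ_{l=1}^p λ_l^k = 1; (A3) for each i with g_i(x̄) < 0, μ_i^k = 0 for all large k; and (E1) μ_i^k = b_k · max(g_i(x^k), 0) for all i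 and τ_j^k = c_k · h_j(x^k) ≥ 0 for all j and all k. Assume further that the quasi-normality constraint qualification (QNCQ) holds at x̄: there is no (μ, τ) ∈ ℝ^m_+ × ℝ^r with (μ, τ) ≠ 0, Σ_{i=1}^m μ_i ∇g_i(x̄) + Σ_{j=1}^r τ_j ∇h_j(x̄) = 0, and such that every neighborhood of x̄ contains a point x with g_i(x) > 0 for all i with μ_i > 0 and τ_j h_j(x) > 0 for all j with τ_j ≠ 0. Then the KKT condition holds at x̄: there exists (λ, μ, τ) ∈ ℝ^p_+ × ℝ^m_+ × ℝ^r with λ ≠ 0, Σ_{l=1}^p λ_l ∇f_l(x̄) + Σ_{i=1}^m μ_i ∇g_i(x̄) + Σ_{j=1}^r τ_j ∇h_j(x̄) = 0, and μ_i g_i(x̄) = 0 for every i = 1,…,m. -/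
open Filter Topology

/-- The gradient of a continuously differentiable function is continuous. -/
theorem ContDiff.continuous_gradient {E : Type*} [NormedAddCommGroup E] [InnerProductSpace ℝ E]
    [CompleteSpace E] {φ : E → ℝ} (hφ : ContDiff ℝ 1 φ) : Continuous (gradient φ) :=
  (InnerProductSpace.toDual ℝ E).symm.continuous.comp (hφ.continuous_fderiv one_ne_zero)

/-- A sequence of nonzero vectors in a proper space has a subsequence whose directions converge
to a nonzero vector. -/
theorem exists_subseq_tendsto_normalized {V : Type*} [NormedAddCommGroup V] [NormedSpace ℝ V]
    [ProperSpace V] (v : ℕ → V) (hv : ∀ k, v k ≠ 0) :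
    ∃ u : V, u ≠ 0 ∧ ∃ φ : ℕ → ℕ, StrictMono φ ∧
      Tendsto (fun k => ‖v (φ k)‖⁻¹ • v (φ k)) atTop (𝓝 u) := by
  have hmem : ∀ k, ‖v k‖⁻¹ • v k ∈ Metric.sphere (0 : V) 1 := fun k => by
    simp [norm_smul, hv k]
  obtain ⟨u, hu, φ, hφ, hlim⟩ := (isCompact_sphere (0 : V) 1).tendsto_subseq hmem
  exact ⟨u, ne_zero_of_mem_unit_sphere ⟨u, hu⟩, φ, hφ, hlim⟩

/-- Linear combinations of gradients converge when the coefficients and the base points do. -/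
theorem tendsto_sum_smul_gradient {E ι : Type*} [NormedAddCommGroup E] [InnerProductSpace ℝ E]
    [CompleteSpace E] [Fintype ι] {F : ι → E → ℝ} (hF : ∀ i, ContDiff ℝ 1 (F i))
    {y : ℕ → E} {a : E} (hy : Tendsto y atTop (𝓝 a))
    {w : ℕ → ι → ℝ} {w₀ : ι → ℝ} (hw : Tendsto w atTop (𝓝 w₀)) :
    Tendsto (fun k => ∑ i, w k i • gradient (F i) (y k)) atTop
      (𝓝 (∑ i, w₀ i • gradient (F i) a)) :=
  tendsto_finsetSum _ fun i _ =>
    (tendsto_pi_nhds.1 hw i).smul (((hF i).continuous_gradient.tendsto a).comp hy)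

/-- **AKKT + (E1) + QNCQ implies KKT** (smooth case). -/
theorem akkt_qncq_implies_kkt
    {n p m r : ℕ} (hp : 0 < p)
    (f : Fin p → EuclideanSpace ℝ (Fin n) → ℝ)
    (g : Fin m → EuclideanSpace ℝ (Fin n) → ℝ)
    (h : Fin r → EuclideanSpace ℝ (Fin n) → ℝ)
    (hf : ∀ l, ContDiff ℝ 1 (f l))
    (hg : ∀ i, ContDiff ℝ 1 (g i))
    (hh : ∀ j, ContDiff ℝ 1 (h j))
    (xbar : EuclideanSpace ℝ (Fin n))
    (hxg : ∀ i, g i xbar ≤ 0) (hxh : ∀ j, h j xbar = 0)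
    (x : ℕ → EuclideanSpace ℝ (Fin n))
    (lam : ℕ → Fin p → ℝ) (mu : ℕ → Fin m → ℝ) (tau : ℕ → Fin r → ℝ)
    (b c : ℕ → ℝ) (hb : ∀ k, 0 < b k) (hc : ∀ k, 0 < c k)
    (hlam : ∀ k l, 0 ≤ lam k l) (hmu : ∀ k i, 0 ≤ mu k i)
    -- (A0)
    (hx : Tendsto x atTop (𝓝 xbar))
    -- (A1)
    (hA1 : Tendsto (fun k => ‖∑ l, lam k l • gradient (f l) (x k)
      + ∑ i, mu k i • gradient (g i) (x k)
      + ∑ j, tau k j • gradient (h j) (x k)‖) atTop (𝓝 0))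
    -- (A2)
    (hA2 : ∀ k, ∑ l, lam k l = 1)
    -- (A3)
    (hA3 : ∀ i, g i xbar < 0 → ∀ᶠ k in atTop, mu k i = 0)
    -- (E1)
    (hE1g : ∀ k i, mu k i = b k * max (g i (x k)) 0)
    (hE1h : ∀ k j, tau k j = c k * h j (x k) ∧ 0 ≤ tau k j)
    -- QNCQ
    (hQNCQ : ¬ ∃ (μ : Fin m → ℝ) (τ : Fin r → ℝ),
      (∀ i, 0 ≤ μ i) ∧ (μ ≠ 0 ∨ τ ≠ 0) ∧
      (∑ i, μ i • gradient (g i) xbar + ∑ j, τ j • gradient (h j) xbar = 0) ∧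
      (∀ U ∈ 𝓝 xbar, ∃ z ∈ U,
        (∀ i, 0 < μ i → 0 < g i z) ∧ (∀ j, τ j ≠ 0 → 0 < τ j * h j z))) :
    ∃ (lam0 : Fin p → ℝ) (mu0 : Fin m → ℝ) (tau0 : Fin r → ℝ),
      (∀ l, 0 ≤ lam0 l) ∧ (∀ i, 0 ≤ mu0 i) ∧ lam0 ≠ 0 ∧
      (∑ l, lam0 l • gradient (f l) xbar + ∑ i, mu0 i • gradient (g i) xbar
        + ∑ j, tau0 j • gradient (h j) xbar = 0) ∧
      (∀ i, mu0 i * g i xbar = 0) := by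
  set v : ℕ → (Fin p → ℝ) × (Fin m → ℝ) × (Fin r → ℝ) := fun k => (lam k, mu k, tau k)
  have hv0 : ∀ k, v k ≠ 0 := fun k hk => by
    have hl : lam k = 0 := congrArg Prod.fst hk
    simpa [hl] using hA2 k
  obtain ⟨⟨lam0, mu0, tau0⟩, hu0, φ, hφ, hlim⟩ := exists_subseq_tendsto_normalized v hv0
  set s : ℕ → ℝ := fun k => ‖v (φ k)‖⁻¹
  have hspos : ∀ k, 0 < s k := fun k => inv_pos.2 (norm_pos_iff.2 (hv0 _))
  have hlamlim : Tendsto (fun k => s k • lam (φ k)) atTop (𝓝 lam0) := hlim.fst_nhds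
  have hmulim : Tendsto (fun k => s k • mu (φ k)) atTop (𝓝 mu0) := hlim.snd_nhds.fst_nhds
  have htaulim : Tendsto (fun k => s k • tau (φ k)) atTop (𝓝 tau0) := hlim.snd_nhds.snd_nhds
  have hxφ : Tendsto (fun k => x (φ k)) atTop (𝓝 xbar) := hx.comp hφ.tendsto_atTop
  -- the scaling factors converge, being the sums of the rescaled objective multipliers
  have hslim : Tendsto s atTop (𝓝 (∑ l, lam0 l)) := by
    refine (tendsto_finsetSum Finset.univ fun l _ => tendsto_pi_nhds.1 hlamlim l).congr fun k => ?_
    simp [← Finset.mul_sum, hA2]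
  have hres : ∑ l, lam0 l • gradient (f l) xbar + ∑ i, mu0 i • gradient (g i) xbar
      + ∑ j, tau0 j • gradient (h j) xbar = 0 := by
    have hzero := hslim.smul
      ((tendsto_zero_iff_norm_tendsto_zero.2 hA1).comp hφ.tendsto_atTop)
    rw [smul_zero] at hzero
    refine tendsto_nhds_unique (((tendsto_sum_smul_gradient hf hxφ hlamlim).add
      (tendsto_sum_smul_gradient hg hxφ hmulim)).add
      (tendsto_sum_smul_gradient hh hxφ htaulim)) (hzero.congr fun k => ?_)
    simp [Finset.smul_sum, smul_smul]
  have hlam0 : ∀ l, 0 ≤ lam0 l := fun l =>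
    ge_of_tendsto' (tendsto_pi_nhds.1 hlamlim l) fun k => mul_nonneg (hspos k).le (hlam _ l)
  have hmu0 : ∀ i, 0 ≤ mu0 i := fun i =>
    ge_of_tendsto' (tendsto_pi_nhds.1 hmulim i) fun k => mul_nonneg (hspos k).le (hmu _ i)
  have htau0 : ∀ j, 0 ≤ tau0 j := fun j =>
    ge_of_tendsto' (tendsto_pi_nhds.1 htaulim j) fun k =>
      mul_nonneg (hspos k).le (hE1h _ j).2
  refine ⟨lam0, mu0, tau0, hlam0, hmu0, ?_, hres, fun i => ?_⟩
  · rintro rfl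
    refine hQNCQ ⟨mu0, tau0, hmu0, ?_, by simpa using hres, fun U hU => ?_⟩
    · by_contra! hcon
      exact hu0 (by rw [hcon.1, hcon.2]; rfl)
    · have hgpos : ∀ᶠ k in atTop, ∀ i, 0 < mu0 i → 0 < g i (x (φ k)) := by
        refine eventually_all.2 fun i => ?_
        by_cases hi : 0 < mu0 i
        · filter_upwards [(tendsto_pi_nhds.1 hmulim i).eventually_const_lt hi] with k hk _
          have hpos : 0 < b (φ k) * max (g i (x (φ k))) 0 :=
            hE1g (φ k) i ▸ pos_of_mul_pos_right hk (hspos k).le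
          simpa using pos_of_mul_pos_right hpos (hb _).le
        · exact Eventually.of_forall fun _ hi' => absurd hi' hi
      have hhpos : ∀ᶠ k in atTop, ∀ j, tau0 j ≠ 0 → 0 < tau0 j * h j (x (φ k)) := by
        refine eventually_all.2 fun j => ?_
        by_cases hj : tau0 j = 0
        · exact Eventually.of_forall fun _ hj' => absurd hj hj'
        · have hj' : 0 < tau0 j := (htau0 j).lt_of_ne' hj
          filter_upwards [(tendsto_pi_nhds.1 htaulim j).eventually_const_lt hj'] with k hk _
          have hpos : 0 < c (φ k) * h j (x (φ k)) :=
            (hE1h (φ k) j).1 ▸ pos_of_mul_pos_right hk (hspos k).le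
          exact mul_pos hj' (pos_of_mul_pos_right hpos (hc _).le)
      obtain ⟨k, hkU, hkg, hkh⟩ := ((hxφ.eventually_mem hU).and (hgpos.and hhpos)).exists
      exact ⟨x (φ k), hkU, hkg, hkh⟩
  · rcases (hxg i).lt_or_eq with hi | hi
    · have hev : ∀ᶠ k in atTop, (s k • mu (φ k)) i = 0 := by
        filter_upwards [hφ.tendsto_atTop.eventually (hA3 i hi)] with k hk
        simp [hk]
      rw [tendsto_nhds_unique_of_eventuallyEq (tendsto_pi_nhds.1 hmulim i)
        tendsto_const_nhds hev, zero_mul]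
    · rw [hi, mul_zero]
end
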